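/- arXiv:2102.10597 — 4 statements merged into one kernel-verified Lean document; each statement's English description precedes it below -/
import Mathlib

section
/- A Byzantine linearization of a reliable broadcast object, in an execution where all correct processes eventually pull all messages (invoke deliver(j,ts) for every sender j and timestamp ts, infinitely often), satisfies the three classic reliable broadcast properties: Validity (if a correct process broadcasts m then all correct processes eventually deliver m), Agreement (if a correct process delivers m then all correct processes eventually deliver m), and Integrity (no process delivers two different messages for the same (ts,j), and if j is correct it delivers only messages j previously broadcast). -/
/-!
A `deliver(j,ts)` event reports the first `broadcast(ts,·)` of `j` in the history. That first
broadcast has a fixed position, independent of the `deliver` event (`IsFirstBroadcast.unique`), so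
every `deliver(j,ts)` placed after it returns its value (`deliver_eq_of_isFirstBroadcast`) and every
non-`⊥` delivery comes from it (`exists_isFirstBroadcast_of_deliver`). Integrity follows at once.
Since every correct process pulls infinitely often, each of them has a pull after the first
broadcast, which therefore returns its value: this is Agreement. It is also Validity, because a
correct process broadcasts at most once per timestamp, so any broadcast of it is the first one.
-/

set_option autoImplicit false

/-! ## Byzantine linearizations of a reliable broadcast object

A Byzantine linearization of an execution of a reliable broadcast object is an
infinite sequential history (one operation per index, in linearization order) that
agrees with the execution on the operations of correct processes and satisfies the
sequential specification of reliable broadcast (Definition 6.1): `deliver(j,ts)`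
returns the value `v` of the first `broadcast(ts,v)` invoked by `j` before it, or
`⊥` if there is none. -/

/-- Operations of the reliable broadcast object over values `V`. -/
inductive RBOp (V : Type) where
  | broadcast (ts : ℕ) (v : V)
  | deliver (j ts : ℕ)

/-- A sequential event: the invoking process, the operation, and its result
(`none` stands for `⊥`; the result of a `broadcast` is irrelevant). -/
abbrev RBEv (V : Type) := ℕ × RBOp V × Option V

/-- The sequential history `σ` satisfies the sequential specification of reliable
broadcast: every `deliver(j,ts)` returns the value of the first `broadcast(ts,·)`
invoked by `j` before it, or `⊥` if `j` invoked no such broadcast. -/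
def RBSeqSpec {V : Type} (σ : ℕ → RBEv V) : Prop :=
  ∀ k p j ts r, σ k = (p, RBOp.deliver j ts, r) →
    ((r = none ∧ ∀ m v res, m < k → σ m ≠ (j, RBOp.broadcast ts v, res)) ∨
     (∃ v m res, m < k ∧ r = some v ∧ σ m = (j, RBOp.broadcast ts v, res) ∧
        ∀ m' v' res', m' < m → σ m' ≠ (j, RBOp.broadcast ts v', res')))

/-- Event `m` of `σ` is the first `broadcast(ts,·)` invoked by `j`, and its value is `v`. -/
def IsFirstBroadcast {V : Type} (σ : ℕ → RBEv V) (j ts m : ℕ) (v : V) : Prop :=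
  (∃ res, σ m = (j, RBOp.broadcast ts v, res)) ∧
    ∀ m' v' res', m' < m → σ m' ≠ (j, RBOp.broadcast ts v', res')

theorem IsFirstBroadcast.unique {V : Type} {σ : ℕ → RBEv V} {j ts m m' : ℕ} {v v' : V}
    (h : IsFirstBroadcast σ j ts m v) (h' : IsFirstBroadcast σ j ts m' v') : v = v' := by
  obtain ⟨⟨res, hm⟩, hfirst⟩ := h
  obtain ⟨⟨res', hm'⟩, hfirst'⟩ := h'
  rcases lt_trichotomy m m' with hlt | rfl | hlt
  · exact absurd hm (hfirst' _ _ _ hlt)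
  · rw [hm] at hm'
    simp only [Prod.mk.injEq, RBOp.broadcast.injEq] at hm'
    exact hm'.2.1.2
  · exact absurd hm' (hfirst _ _ _ hlt)

theorem exists_isFirstBroadcast_of_deliver {V : Type} {σ : ℕ → RBEv V} (hspec : RBSeqSpec σ)
    {k p j ts : ℕ} {v : V} (h : σ k = (p, RBOp.deliver j ts, some v)) :
    ∃ m < k, IsFirstBroadcast σ j ts m v := by
  rcases hspec k p j ts _ h with ⟨hnone, -⟩ | ⟨w, m, res, hlt, hw, hm, hfirst⟩
  · exact absurd hnone (Option.some_ne_none v)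
  · obtain rfl := Option.some.inj hw
    exact ⟨m, hlt, ⟨res, hm⟩, hfirst⟩

theorem deliver_eq_of_isFirstBroadcast {V : Type} {σ : ℕ → RBEv V} (hspec : RBSeqSpec σ)
    {k p j ts m : ℕ} {v : V} {r : Option V} (hfb : IsFirstBroadcast σ j ts m v) (hlt : m < k)
    (h : σ k = (p, RBOp.deliver j ts, r)) : r = some v := by
  rcases hspec k p j ts r h with ⟨-, hno⟩ | ⟨w, m', res, -, rfl, hm', hfirst⟩
  · obtain ⟨⟨res, hm⟩, -⟩ := hfb
    exact absurd hm (hno _ _ _ hlt)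
  · rw [hfb.unique ⟨⟨res, hm'⟩, hfirst⟩]

/-- **Lemma 6.2.** A Byzantine linearization `σ` of a reliable broadcast object — in
an execution where all correct processes eventually pull all messages, i.e. invoke
`deliver(j,ts)` for every sender `j` and timestamp `ts` infinitely often — satisfies
the three classic reliable broadcast properties: Validity, Agreement, and Integrity.
(`Correct` is the set of correct processes; correct processes never invoke
`broadcast` twice with the same timestamp.) -/
theorem byzantine_linearization_of_rb_satisfies_rb_properties
    {V : Type} (Correct : ℕ → Prop) (σ : ℕ → RBEv V)
    (hspec : RBSeqSpec σ)
    -- all correct processes pull all messages infinitely often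
    (hpull : ∀ p, Correct p → ∀ j ts N, ∃ k, N ≤ k ∧ ∃ r,
        σ k = (p, RBOp.deliver j ts, r))
    -- correct processes do not invoke `broadcast` twice with the same timestamp
    (honce : ∀ p, Correct p → ∀ k k' ts v v' res res',
        σ k = (p, RBOp.broadcast ts v, res) → σ k' = (p, RBOp.broadcast ts v', res') →
        k = k') :
    -- Validity: if a correct process broadcasts `m`, every correct process
    -- eventually delivers `m`.
    (∀ p, Correct p → ∀ k ts v res, σ k = (p, RBOp.broadcast ts v, res) →
        ∀ q, Correct q → ∃ k', σ k' = (q, RBOp.deliver p ts, some v)) ∧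
    -- Agreement: if a correct process delivers `m`, every correct process
    -- eventually delivers `m`.
    (∀ q, Correct q → ∀ k j ts v, σ k = (q, RBOp.deliver j ts, some v) →
        ∀ q', Correct q' → ∃ k', σ k' = (q', RBOp.deliver j ts, some v)) ∧
    -- Integrity: no process delivers two different messages for the same `(ts,j)`,
    -- and if `j` is correct it delivers only messages `j` previously broadcast.
    ((∀ k k' p p' j ts v v', σ k = (p, RBOp.deliver j ts, some v) →
        σ k' = (p', RBOp.deliver j ts, some v') → v = v') ∧
     (∀ k p j ts v, Correct j → σ k = (p, RBOp.deliver j ts, some v) →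
        ∃ m res, m < k ∧ σ m = (j, RBOp.broadcast ts v, res))) := by
  -- Every correct process pulls at some point after a first broadcast, and so obtains its value.
  have eventually_delivers : ∀ j ts m v, IsFirstBroadcast σ j ts m v →
      ∀ q, Correct q → ∃ k, σ k = (q, RBOp.deliver j ts, some v) := by
    intro j ts m v hfb q hq
    obtain ⟨k, hk, r, hr⟩ := hpull q hq j ts (m + 1)
    obtain rfl := deliver_eq_of_isFirstBroadcast hspec hfb hk hr
    exact ⟨k, hr⟩
  refine ⟨?_, ?_, ?_, ?_⟩
  · intro p hp k ts v res hk
    refine eventually_delivers p ts k v ⟨⟨res, hk⟩, fun m' v' res' hlt hm' => ?_⟩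
    exact hlt.ne (honce p hp _ _ _ _ _ _ _ hm' hk)
  · intro q _ k j ts v hk
    obtain ⟨m, -, hfb⟩ := exists_isFirstBroadcast_of_deliver hspec hk
    exact eventually_delivers j ts m v hfb
  · intro k k' p p' j ts v v' hk hk'
    obtain ⟨m, -, hfb⟩ := exists_isFirstBroadcast_of_deliver hspec hk
    obtain ⟨m', -, hfb'⟩ := exists_isFirstBroadcast_of_deliver hspec hk'
    exact hfb.unique hfb'
  · intro k p j ts v _ hk
    obtain ⟨m, hlt, ⟨res, hm⟩, -⟩ := exists_isFirstBroadcast_of_deliver hspec hk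
    exact ⟨m, res, hlt, hm⟩
end

section
/- In every execution of the shared-memory Bracha reliable broadcast algorithm, if ⟨ready,⟨ts,v⟩_i⟩_j appears in register ready_j and ⟨ready,⟨ts,w⟩_i⟩_{j'} appears in register ready_{j'} for any two correct processes j and j', then v = w. -/
set_option autoImplicit false

/-! ## Executions of the shared-memory Bracha reliable broadcast algorithm
(Algorithm 1)

Each process `i` has SWMR registers `send_i`, `echo_i`, `ready_i`, `deliver_i` and a
PKI with unforgeable signatures.  `broadcast(ts,val)` writes `⟨ts,val⟩_i` to `send_i`
and repeatedly calls `deliver(i,ts)` until it returns non-`⊥`.  `refresh()`, invoked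
infinitely often by every correct process, reads each `send_j`; for each properly
signed pair `m` it adds `⟨m⟩_i` to `echo_i`; if no conflicting value (same sender
and timestamp, different value) appears in any process's echo register it adds
`⟨ready,m⟩_i` to `ready_i`; and if `f+1` ready registers contain `⟨ready,m⟩` and a
re-read of all echo registers still shows no conflicting value, it adds `⟨m,σ⟩`
(`σ` a set of `f+1` ready signatures) to `deliver_i`.  `deliver(j,ts)` calls
`refresh()` and, if some process's deliver register contains `⟨⟨ts,v⟩_j,σ⟩` with a
valid set `σ` of `f+1` signatures on `⟨ready,⟨ts,v⟩_j⟩`, copies it to `deliver_i`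
and returns `v`; otherwise it returns `⊥`.

The structure below records, for an arbitrary execution, the (time-indexed) contents
of all registers together with the protocol rules that correct processes obey and
the guarantees of unforgeable signatures. -/

structure BrachaExec (n f : ℕ) (V : Type) where
  /-- the set of correct processes -/
  Correct : ℕ → Prop
  /-- at most `f` of the `n` processes are Byzantine -/
  byz_bound : ∃ B : Finset ℕ, B.card ≤ f ∧ ∀ p, p < n → ¬ Correct p → p ∈ B
  /-- `echoR t k j ts v`: at time `t`, the signed pair `⟨ts,v⟩_j` (validly signed by
  `j`) appears in register `echo_k` -/
  echoR : ℕ → ℕ → ℕ → ℕ → V → Prop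
  /-- `readyR t k j ts v`: at time `t`, `⟨ready,⟨ts,v⟩_j⟩_k` (validly signed by `k`)
  appears in register `ready_k` -/
  readyR : ℕ → ℕ → ℕ → ℕ → V → Prop
  /-- `deliverR t k j ts v σ`: at time `t`, the tuple `⟨⟨ts,v⟩_j,σ⟩` appears in
  register `deliver_k`, where `σ` is a valid set of signatures on
  `⟨ready,⟨ts,v⟩_j⟩` by the processes in `σ` -/
  deliverR : ℕ → ℕ → ℕ → ℕ → V → Finset ℕ → Prop
  /-- values in echo registers of correct processes are never deleted -/
  echo_mono : ∀ t t' k j ts v, Correct k → t ≤ t' → echoR t k j ts v → echoR t' k j ts v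
  /-- values in ready registers of correct processes are never deleted -/
  ready_mono : ∀ t t' k j ts v, Correct k → t ≤ t' → readyR t k j ts v → readyR t' k j ts v
  /-- values in deliver registers of correct processes are never deleted -/
  deliver_mono : ∀ t t' k j ts v σ, Correct k → t ≤ t' →
      deliverR t k j ts v σ → deliverR t' k j ts v σ
  /-- a correct process `k` adds `⟨ready,m⟩_k` to `ready_k` only after writing `m`
  to its own echo register and then performing a collect of *all* echo registers in
  which no conflicting value (same sender and timestamp, different value) appears -/
  ready_rule : ∀ t k j ts v, Correct k → readyR t k j ts v →
      ∃ te, te ≤ t ∧ echoR te k j ts v ∧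
        ∀ p, p < n → ∃ tr, te ≤ tr ∧ tr ≤ t ∧ ∀ w, echoR tr p j ts w → w = v
  /-- entries in the deliver register of a correct process carry a valid proof:
  `σ` contains `f+1` processes, and (by unforgeability of signatures) every correct
  process in `σ` has really signed `⟨ready,⟨ts,v⟩_j⟩`, i.e. added it to its ready
  register -/
  deliver_rule : ∀ t k j ts v σ, Correct k → deliverR t k j ts v σ →
      f + 1 ≤ σ.card ∧ (∀ p ∈ σ, p < n) ∧
      ∀ p ∈ σ, Correct p → ∃ tp, tp ≤ t ∧ readyR tp p j ts v

/-- **Invariant I3.** In every execution of the shared-memory Bracha reliable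
broadcast algorithm, if `⟨ready,⟨ts,v⟩_i⟩_j` appears in register `ready_j` and
`⟨ready,⟨ts,w⟩_i⟩_{j'}` appears in register `ready_{j'}` for any two correct
processes `j` and `j'`, then `v = w`. -/
theorem ready_registers_agree
    (n f : ℕ) (V : Type) (E : BrachaExec n f V)
    (j j' i ts : ℕ) (v w : V) (t t' : ℕ)
    (hj : j < n) (hj' : j' < n)
    (hcj : E.Correct j) (hcj' : E.Correct j')
    (h1 : E.readyR t j i ts v) (h2 : E.readyR t' j' i ts w) :
    v = w := by
  -- Each process echoes its value before its collect, and echoes persist: the collect of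
  -- the process that echoed later therefore sees the value echoed earlier by the other one.
  obtain ⟨te, -, he, hr⟩ := E.ready_rule t j i ts v hcj h1
  obtain ⟨te', -, he', hr'⟩ := E.ready_rule t' j' i ts w hcj' h2
  rcases le_total te te' with h | h
  · obtain ⟨tr, htr, -, hq⟩ := hr' j hj
    exact hq v (E.echo_mono te tr j i ts v hcj (h.trans htr) he)
  · obtain ⟨tr, htr, -, hq⟩ := hr j' hj'
    exact (hq w (E.echo_mono te' tr j' i ts w hcj' (h.trans htr) he')).symm
end

section
/- In every execution of the shared-memory Bracha reliable broadcast algorithm, if ⟨⟨ts,v⟩_i,σ⟩ appears in the deliver register of a correct process j and ⟨⟨ts,w⟩_i,σ'⟩ appears in the deliver register of a correct process j', where σ and σ' are sets of f+1 valid ready-signatures on the respective values, then v = w. -/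
/-!
Each of the two signature sets has more members than there are Byzantine processes, so
each contains a correct process (`BrachaExec.exists_correct_mem`), which really placed the
corresponding value in its ready register. Two correct processes cannot be ready for
conflicting values (`BrachaExec.ready_agree`): each writes its own echo before collecting
all echo registers, so the one whose echo was written later reads the other's echo.
-/

set_option autoImplicit false

namespace BrachaExec

/-- By counting, a set of at least `f+1` processes contains a correct one. -/
lemma exists_correct_mem {n f : ℕ} {V : Type} (E : BrachaExec n f V) {σ : Finset ℕ}
    (hcard : f + 1 ≤ σ.card) (hlt : ∀ p ∈ σ, p < n) : ∃ p ∈ σ, E.Correct p := by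
  obtain ⟨B, hB, hBmem⟩ := E.byz_bound
  obtain ⟨p, hp, hpB⟩ := Finset.exists_mem_notMem_of_card_lt_card (show B.card < σ.card by omega)
  exact ⟨p, hp, by_contra fun hc => hpB (hBmem p (hlt p hp) hc)⟩

/-- Correct processes never hold conflicting ready entries: whichever of the two echoed
last collects the echo registers after the other's echo was written, and so sees it. -/
lemma ready_agree {n f : ℕ} {V : Type} (E : BrachaExec n f V) {p q i ts s u : ℕ} {v w : V}
    (hp : p < n) (hq : q < n) (hcp : E.Correct p) (hcq : E.Correct q)
    (hv : E.readyR s p i ts v) (hw : E.readyR u q i ts w) : v = w := by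
  obtain ⟨a, -, hea, hra⟩ := E.ready_rule _ _ _ _ _ hcp hv
  obtain ⟨b, -, heb, hrb⟩ := E.ready_rule _ _ _ _ _ hcq hw
  rcases le_total a b with hab | hba
  · obtain ⟨r, hbr, -, hr⟩ := hrb p hp
    exact hr v (E.echo_mono _ _ _ _ _ _ hcp (hab.trans hbr) hea)
  · obtain ⟨r, har, -, hr⟩ := hra q hq
    exact (hr w (E.echo_mono _ _ _ _ _ _ hcq (hba.trans har) heb)).symm

end BrachaExec

/-- **Invariant I4.** In every execution of the shared-memory Bracha reliable
broadcast algorithm (with `n > 2f`), if `⟨⟨ts,v⟩_i,σ⟩` appears in the deliver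
register of a correct process `k` and `⟨⟨ts,w⟩_i,σ'⟩` appears in the deliver
register of a correct process `k'`, where `σ` and `σ'` are sets of `f+1` valid
ready-signatures on the respective values, then `v = w`. -/
theorem deliver_registers_agree
    (n f : ℕ) (hn : 2 * f < n) (V : Type) (E : BrachaExec n f V)
    (k k' i ts : ℕ) (v w : V) (t t' : ℕ) (σ σ' : Finset ℕ)
    (hk : k < n) (hk' : k' < n)
    (hck : E.Correct k) (hck' : E.Correct k')
    (hσ : f + 1 ≤ σ.card) (hσ' : f + 1 ≤ σ'.card)
    (hσv : ∀ p ∈ σ, E.Correct p → ∃ u, E.readyR u p i ts v)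
    (hσ'v : ∀ p ∈ σ', E.Correct p → ∃ u, E.readyR u p i ts w)
    (h1 : E.deliverR t k i ts v σ) (h2 : E.deliverR t' k' i ts w σ') :
    v = w := by
  obtain ⟨-, hlt, -⟩ := E.deliver_rule _ _ _ _ _ _ hck h1
  obtain ⟨-, hlt', -⟩ := E.deliver_rule _ _ _ _ _ _ hck' h2
  obtain ⟨p, hp, hcp⟩ := E.exists_correct_mem hσ hlt
  obtain ⟨q, hq, hcq⟩ := E.exists_correct_mem hσ' hlt'
  obtain ⟨s, hs⟩ := hσv p hp hcp
  obtain ⟨u, hu⟩ := hσ'v q hq hcq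
  exact E.ready_agree (hlt p hp) (hlt' q hq) hcp hcq hs hu
end

section
/- In the Byzantine snapshot algorithm, if an update operation by a correct process j that writes the signed pair ⟨ts,v⟩ completes before a snapshot operation by a correct process i begins, then the array s returned by that snapshot satisfies s[j].ts ≥ ts. -/
/-!
A write of `⟨ts,v⟩` by `j` at time `u` puts timestamp `ts` into `collected_j[j]` at time `u + 1`,
and timestamps in the collect array of a correct process never decrease
(`SnapExec.tsAt_collected_mono`). The snapshot merges `collected_j` at some time `tr` after its own
invocation, hence after the update has returned, so the array it merges already has a timestamp
at least `ts` in entry `j`; the returned array dominates the merged one.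
-/

set_option autoImplicit false

/-! ## Executions of the Byzantine snapshot algorithm (Algorithms 2–3)

Each process `i` has an SWMR collect array `collected_i` with one entry per process;
each entry holds a pair `⟨ts,v⟩` signed by the corresponding process (or `⊥`).
`update(v)` by process `i` first reads every process's collect array via
`update-collect`, then increments its local timestamp `ts_i` and writes the signed
pair `⟨ts_i,v⟩_i` to `collected_i[i]`.  `update-collect(c)` copies into
`collected_i[k]` the entry `c[k]` only if it is correctly signed by `k` and its
timestamp is larger than the one currently in `collected_i[k]`.  Signatures are
unforgeable and up to `f` of the `n` processes are Byzantine.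

The structure records the time-indexed register/local-state contents of an
arbitrary execution plus the rules obeyed by correct processes; entries shown as
`some (ts, v)` are validly signed by their index's owner. -/

structure SnapExec (n f : ℕ) (V : Type) where
  /-- the set of correct processes -/
  Correct : ℕ → Prop
  /-- at most `f` of the `n` processes are Byzantine -/
  byz_bound : ∃ B : Finset ℕ, B.card ≤ f ∧ ∀ p, p < n → ¬ Correct p → p ∈ B
  /-- `collected t p k`: the validly `k`-signed pair in entry `k` of `collected_p`
  at time `t` (or `⊥`) -/
  collected : ℕ → ℕ → ℕ → Option (ℕ × V)
  /-- `tsc t i`: the local timestamp `ts_i` of process `i` at time `t` -/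
  tsc : ℕ → ℕ → ℕ
  /-- `writesOwn t i ts v`: at time `t`, process `i` executes line 5 of `update`,
  writing the signed pair `⟨ts,v⟩_i` to `collected_i[i]` -/
  writesOwn : ℕ → ℕ → ℕ → V → Prop
  tsc_init : ∀ i, tsc 0 i = 0
  collected_init : ∀ p k, collected 0 p k = none
  tsc_mono : ∀ t i, Correct i → tsc t i ≤ tsc (t+1) i
  /-- unforgeability: a pair validly signed by a correct process `k` was written by `k` -/
  unforge : ∀ t p k ts v, Correct k → collected t p k = some (ts, v) →
      ∃ u, u < t ∧ writesOwn u k ts v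
  /-- a write of a correct process uses its incremented local timestamp and lands in
  its own entry -/
  write_ts : ∀ t i ts v, Correct i → writesOwn t i ts v →
      ts = tsc t i + 1 ∧ tsc (t+1) i = ts ∧ collected (t+1) i i = some (ts, v)
  /-- the local timestamp changes only by a write -/
  tsc_change : ∀ t i, Correct i → tsc (t+1) i ≠ tsc t i → ∃ ts v, writesOwn t i ts v
  /-- entries of a correct process change only to correctly signed pairs with a
  strictly larger timestamp (the check at line 14, resp. the write at line 5) -/
  entry_change : ∀ t i k, Correct i → collected (t+1) i k ≠ collected t i k →
      ∃ ts v, collected (t+1) i k = some (ts, v) ∧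
        ∀ ts' v', collected t i k = some (ts', v') → ts' < ts

/-- The timestamp of entry `m` of an `n`-array of signed timestamp–value pairs
(`0` for `⊥`). -/
def tsAt {V : Type} (s : ℕ → Option (ℕ × V)) (m : ℕ) : ℕ :=
  (s m).elim 0 Prod.fst

/-- Coordinate-wise order on `n`-arrays: `SnapLE n s s'` (i.e. `s ≤ s'`) iff every
entry of `s'` has a timestamp at least that of the corresponding entry of `s`. -/
def SnapLE {V : Type} (n : ℕ) (s s' : ℕ → Option (ℕ × V)) : Prop :=
  ∀ m, m < n → tsAt s m ≤ tsAt s' m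

/-- The stability condition (Definition A.1) for a return value `s` of
`snapshot-aux(k)`, with round `r`: there are sets `S ⊆ S'` of processes with
`|S| ≥ f+1` such that for each `p ∈ S` the union of all `jsenders` sets sent in
`p`'s messages of instance `k` in rounds `1..r` is `S'`, and `s` is the
coordinate-wise supremum of the collect arrays sent in the round-0 start messages
of the members of `S'`.  (`startCollect k p` is the collect array broadcast by `p`
in its start message of instance `k`; `sendersSent k p r` is the cumulative senders
set reported by `p` through round `r` — both unique per process and round since the
underlying reliable broadcast prevents equivocation.) -/
def StableAt {V : Type} (n f : ℕ)
    (startCollect : ℕ → ℕ → Option (ℕ → Option (ℕ × V)))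
    (sendersSent : ℕ → ℕ → ℕ → Option (Finset ℕ))
    (k r : ℕ) (s : ℕ → Option (ℕ × V)) : Prop :=
  ∃ S S' : Finset ℕ, f + 1 ≤ S.card ∧ S ⊆ S' ∧ (∀ p ∈ S', p < n) ∧
    (∀ p ∈ S, sendersSent k p r = some S') ∧
    (∀ p ∈ S', ∃ c, startCollect k p = some c) ∧
    (∀ m, m < n →
      (∀ p ∈ S', ∀ c, startCollect k p = some c → tsAt c m ≤ tsAt s m) ∧
      (∃ p ∈ S', ∃ c, startCollect k p = some c ∧ s m = c m))

/-- An execution of the Byzantine snapshot algorithm together with its operation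
events (`update`, `snapshot` and `snapshot-aux` instances) and the protocol facts
they satisfy. -/
structure SnapExecFull (n f : ℕ) (V : Type) extends SnapExec n f V where
  /-- `updOp i t t' ts v`: process `i` performs an `update` writing `⟨ts,v⟩_i`,
  invoked at time `t` and returning at time `t'` -/
  updOp : ℕ → ℕ → ℕ → ℕ → V → Prop
  /-- `snapOp i t t' s`: process `i` performs a `snapshot` invoked at `t`,
  returning the array `s` at `t'` -/
  snapOp : ℕ → ℕ → ℕ → (ℕ → Option (ℕ × V)) → Prop
  /-- `auxOp i k t t' s`: process `i`'s `snapshot-aux(k)` is invoked at `t` and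
  returns the array `s` at `t'` -/
  auxOp : ℕ → ℕ → ℕ → ℕ → (ℕ → Option (ℕ × V)) → Prop
  /-- the collect array broadcast by `p` in its round-0 start message of
  `snapshot-aux` instance `k` (unique, by reliable broadcast) -/
  startCollect : ℕ → ℕ → Option (ℕ → Option (ℕ × V))
  /-- the cumulative senders set reported by `p` in instance `k` through round `r`
  (unique per round, by reliable broadcast) -/
  sendersSent : ℕ → ℕ → ℕ → Option (Finset ℕ)
  /-- an update of a correct process performs its write during the operation -/
  updOp_writes : ∀ i t t' ts v, Correct i → updOp i t t' ts v →
      t < t' ∧ ∃ u, t ≤ u ∧ u < t' ∧ writesOwn u i ts v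
  /-- an update of a correct process first merges every correct process's collect
  array (lines 2–3) into its own collect, which it holds upon return -/
  upd_collects_all : ∀ i t t' ts v, Correct i → updOp i t t' ts v →
      ∀ p, p < n → Correct p → ∃ tr, t ≤ tr ∧ tr ≤ t' ∧
        SnapLE n (fun m => collected tr p m) (fun m => collected t' i m)
  /-- senders sets reported by a process are non-decreasing across rounds -/
  senders_mono : ∀ k p r r' A A', r ≤ r' → sendersSent k p r = some A →
      sendersSent k p r' = some A' → A ⊆ A'
  /-- a snapshot of a correct process returns the value of one of its
  `snapshot-aux` instances, executed within the operation -/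
  snap_from_aux : ∀ i t t' s, Correct i → snapOp i t t' s →
      ∃ k ta ta', t ≤ ta ∧ ta ≤ ta' ∧ ta' ≤ t' ∧ auxOp i k ta ta' s
  /-- every value returned from `snapshot-aux(k)` by a correct process satisfies
  the stability condition for some round (Observation A.3) -/
  aux_stable : ∀ i k t t' s, Correct i → auxOp i k t t' s →
      ∃ r, StableAt n f startCollect sendersSent k r s
  /-- at the end of a `snapshot-aux` of a correct process, its own collect array
  dominates the returned array (it returns its collect, or merges the adopted
  saved snapshot into its collect before returning) -/
  aux_ret_collect : ∀ i k t t' s, Correct i → auxOp i k t t' s →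
      SnapLE n s (fun m => collected t' i m)
  /-- a snapshot of a correct process merges every correct process's collect array
  (line 9) into its own, and only returns an array dominating the result
  (lines 10–13) -/
  snap_collects_all : ∀ i t t' s, Correct i → snapOp i t t' s →
      ∀ p, p < n → Correct p → ∃ tr, t ≤ tr ∧ tr ≤ t' ∧
        SnapLE n (fun m => collected tr p m) s
  /-- upon return of a snapshot, the returned array is reflected in the collect
  array of the invoking process -/
  snap_ret_collect : ∀ i t t' s, Correct i → snapOp i t t' s →
      SnapLE n s (fun m => collected t' i m)

/-- Every entry of a correct process's collect array has a non-decreasing timestamp, where `⊥`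
counts as timestamp `0`. -/
theorem SnapExec.tsAt_collected_mono {n f : ℕ} {V : Type} (E : SnapExec n f V) {p : ℕ}
    (hp : E.Correct p) (m : ℕ) : Monotone fun t => tsAt (E.collected t p) m := by
  refine monotone_nat_of_le_succ fun t => ?_
  by_cases h : E.collected (t + 1) p m = E.collected t p m
  · simp [tsAt, h]
  · obtain ⟨ts, v, hnew, hlt⟩ := E.entry_change t p m hp h
    rcases hold : E.collected t p m with _ | ⟨ts', v'⟩
    · simp [tsAt, hold]
    · simpa [tsAt, hold, hnew] using (hlt ts' v' hold).le

/-- **Lemma 7.5.** In the Byzantine snapshot algorithm, if an update operation by a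
correct process `j` that writes the signed pair `⟨ts,v⟩` completes before a snapshot
operation by a correct process `i` begins, then the array `s` returned by that
snapshot satisfies `s[j].ts ≥ ts`. -/
theorem snapshot_sees_preceding_update
    (n f : ℕ) (hn : 2 * f < n) (V : Type) (E : SnapExecFull n f V)
    (i j : ℕ) (hi : i < n) (hj : j < n) (hci : E.Correct i) (hcj : E.Correct j)
    (tu tu' ts : ℕ) (v : V) (hupd : E.updOp j tu tu' ts v)
    (ti ti' : ℕ) (s : ℕ → Option (ℕ × V)) (hsnap : E.snapOp i ti ti' s)
    (hprec : tu' < ti) :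
    ts ≤ tsAt s j := by
  obtain ⟨-, u, -, hu, hw⟩ := E.updOp_writes j tu tu' ts v hcj hupd
  obtain ⟨-, -, hown⟩ := E.write_ts u j ts v hcj hw
  obtain ⟨tr, htr, -, hle⟩ := E.snap_collects_all i ti ti' s hci hsnap j hj hcj
  calc ts = tsAt (E.collected (u + 1) j) j := by simp [tsAt, hown]
    _ ≤ tsAt (E.collected tr j) j :=
      E.toSnapExec.tsAt_collected_mono hcj j (show u + 1 ≤ tr by omega)
    _ ≤ tsAt s j := hle j hj
end
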